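/- Let k be a field, m ≥ 1 an integer, and let Γ(m) be the subring of the m×m matrix ring M_m(k[[x]]) over the formal power series ring k[[x]] consisting of all matrices whose entries strictly below the diagonal lie in the maximal ideal (x) of k[[x]]. Then M_m(k[[x]]), regarded as a left Γ(m)-module via the inclusion Γ(m) ⊆ M_m(k[[x]]), is a projective Γ(m)-module. -/

import Mathlib

/-- The subring `Γ(m)` of `M_m(k[[x]])` consisting of the matrices whose entries strictly
below the diagonal lie in the maximal ideal `(x)` of `k[[x]]`, i.e. have zero constant
coefficient. -/
noncomputable def Gamma (k : Type*) [Field k] (m : ℕ) :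
    Subring (Matrix (Fin m) (Fin m) (PowerSeries k)) where
  carrier := {A | ∀ i j : Fin m, j < i → PowerSeries.constantCoeff (A i j) = 0}
  mul_mem' := by
    intro A B hA hB
    have hA' : ∀ i j : Fin m, j < i → PowerSeries.constantCoeff (A i j) = 0 := hA
    have hB' : ∀ i j : Fin m, j < i → PowerSeries.constantCoeff (B i j) = 0 := hB
    intro i j hji
    show PowerSeries.constantCoeff ((A * B) i j) = 0
    rw [Matrix.mul_apply, map_sum]
    refine Finset.sum_eq_zero fun l _ => ?_
    rw [map_mul]
    rcases le_or_gt l j with h | h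
    · rw [hA' i l (h.trans_lt hji), zero_mul]
    · rw [hB' l j h, mul_zero]
  one_mem' := by
    intro i j hji
    show PowerSeries.constantCoeff ((1 : Matrix (Fin m) (Fin m) (PowerSeries k)) i j) = 0
    rw [Matrix.one_apply_ne hji.ne', map_zero]
  add_mem' := by
    intro A B hA hB
    have hA' : ∀ i j : Fin m, j < i → PowerSeries.constantCoeff (A i j) = 0 := hA
    have hB' : ∀ i j : Fin m, j < i → PowerSeries.constantCoeff (B i j) = 0 := hB
    intro i j hji
    show PowerSeries.constantCoeff ((A + B) i j) = 0
    rw [Matrix.add_apply, map_add, hA' i j hji, hB' i j hji, add_zero]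
  zero_mem' := by
    intro i j hji
    show PowerSeries.constantCoeff ((0 : Matrix (Fin m) (Fin m) (PowerSeries k)) i j) = 0
    rw [Matrix.zero_apply, map_zero]
  neg_mem' := by
    intro A hA
    have hA' : ∀ i j : Fin m, j < i → PowerSeries.constantCoeff (A i j) = 0 := hA
    intro i j hji
    show PowerSeries.constantCoeff ((-A) i j) = 0
    rw [Matrix.neg_apply, map_neg, hA' i j hji, neg_zero]

/-! If `∑ i, a i * b i = 1` in a ring `R` and every left ideal `R a i` lies in a subring `S`, then
`r = ∑ i, (r * a i) * b i` exhibits the right multiplications by the `a i` and the elements `b i` as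
a dual basis of the left `S`-module `R`. For `S = Γ(m)`, the matrix units `E_{il}` and `E_{li}` with
`l` the last index do this: a matrix supported in the last column has no nonzero entry strictly
below the diagonal. -/

theorem projective_of_sum_smul_eq_self {S M ι : Type*} [Semiring S] [AddCommMonoid M] [Module S M]
    [Fintype ι] (f : ι → M →ₗ[S] S) (b : ι → M) (hfb : ∀ x, ∑ i, f i x • b i = x) :
    Module.Projective S M :=
  .of_split (LinearMap.pi f) (Fintype.linearCombination S b) (LinearMap.ext hfb)

section LeftConductor

variable {R σ : Type*} [Semiring R] [SetLike σ R] [SubsemiringClass σ R] (S : σ)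

/-- Right multiplication by `a`, as a left `S`-linear functional on `R`, for an element `a` of the
left conductor of `S` in `R`, i.e. with `R a ⊆ S`. -/
def mulRightFunctional (a : R) (ha : ∀ r, r * a ∈ S) : R →ₗ[S] S where
  toFun r := ⟨r * a, ha r⟩
  map_add' r t := Subtype.ext (add_mul r t a)
  map_smul' s r := Subtype.ext (mul_assoc (s : R) r a)

theorem projective_of_sum_mul_eq_one {ι : Type*} [Fintype ι] (a b : ι → R)
    (ha : ∀ i r, r * a i ∈ S) (hab : ∑ i, a i * b i = 1) : Module.Projective S R :=
  projective_of_sum_smul_eq_self (fun i => mulRightFunctional S (a i) (ha i)) b fun r =>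
    calc
      ∑ i, r * a i * b i = r * ∑ i, a i * b i := by simp_rw [Finset.mul_sum, mul_assoc]
      _ = r := by rw [hab, mul_one]

end LeftConductor

theorem sum_single_mul_single_eq_one {n α : Type*} [Fintype n] [DecidableEq n]
    [NonAssocSemiring α] (l : n) :
    ∑ i, Matrix.single i l (1 : α) * Matrix.single l i 1 = 1 := by
  simp_rw [Matrix.single_mul_single_same, mul_one, Matrix.sum_single_one]

theorem mul_single_mem_Gamma {k : Type*} [Field k] {m : ℕ} {l : Fin m} (hl : IsTop l)
    (A : Matrix (Fin m) (Fin m) (PowerSeries k)) (i : Fin m) (c : PowerSeries k) :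
    A * Matrix.single i l c ∈ Gamma k m := by
  intro p q hqp
  have hql : q ≠ l := (hqp.trans_le (hl p)).ne
  rw [Matrix.mul_single_apply_of_ne _ _ _ _ _ hql, map_zero]

/-- For a field `k` and `m ≥ 1`, the matrix ring `M_m(k[[x]])`, regarded
as a left `Γ(m)`-module via left multiplication by elements of the subring `Γ(m)`, is a
projective `Γ(m)`-module. -/
theorem stmt_7 (k : Type*) [Field k] (m : ℕ) (hm : 1 ≤ m) :
    @Module.Projective (Gamma k m) _ (Matrix (Fin m) (Fin m) (PowerSeries k)) _
      (Module.compHom (Matrix (Fin m) (Fin m) (PowerSeries k)) (Gamma k m).subtype) := by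
  obtain ⟨n, rfl⟩ := Nat.exists_eq_add_of_le' hm
  exact projective_of_sum_mul_eq_one (Gamma k (n + 1))
    (fun i => Matrix.single i (Fin.last n) 1) (fun i => Matrix.single (Fin.last n) i 1)
    (fun i A => mul_single_mem_Gamma Fin.le_last A i 1)
    (sum_single_mul_single_eq_one (Fin.last n))
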